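/- Let n ≥ 2, let f : ℂⁿ → ℂ be holomorphic, and let p ∈ ℂⁿ with f(p) ≠ 0. Let X be a holomorphic map from an open neighborhood of p in ℂⁿ to ℂⁿ with X(p) ≠ 0 and df(p)(X(p)) = 0, and let Z : B(0,ε) → ℂⁿ be holomorphic with Z(0) = p, Z′(T) = X(Z(T)), and f(Z(T)) ≠ 0 for all T. Define h : B(0,ε) → ℝ by h(T) = (1 + |f(Z(T))|²·u(|f(Z(T))|²)²)·|df(Z(T))(X(Z(T)))|² + ‖X(Z(T))‖². Then h(0) = ‖X(p)‖², (∂h)(0) = ⟨dX(p)(X(p)), X(p)⟩, (∂̄h)(0) = ⟨X(p), dX(p)(X(p))⟩, and (∂∂̄h)(0) ≥ ‖dX(p)(X(p))‖², where dX(p) : ℂⁿ → ℂⁿ is the complex derivative of X at p. -/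

import Mathlib

open Complex Filter Topology Metric
open scoped ComplexOrder

/-- The function `u(t) = (t-1)/(t log t)` for `t ≠ 1`, extended by `u(1) = 1`. -/
noncomputable def u (t : ℝ) : ℝ := if t = 1 then 1 else (t - 1) / (t * Real.log t)

/-- Wirtinger derivative `∂g` of a complex-valued function on `ℂ` (real-differentiable sense). -/
noncomputable def wdz (g : ℂ → ℂ) (z : ℂ) : ℂ :=
  (fderiv ℝ g z 1 - Complex.I * fderiv ℝ g z Complex.I) / 2

/-- Wirtinger derivative `∂̄g` of a complex-valued function on `ℂ`. -/
noncomputable def wdzbar (g : ℂ → ℂ) (z : ℂ) : ℂ :=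
  (fderiv ℝ g z 1 + Complex.I * fderiv ℝ g z Complex.I) / 2

/-- `∂h` for a real-valued `h`. -/
noncomputable def wdzR (h : ℂ → ℝ) : ℂ → ℂ := wdz fun w => (h w : ℂ)

/-- `∂̄h` for a real-valued `h`. -/
noncomputable def wdzbarR (h : ℂ → ℝ) : ℂ → ℂ := wdzbar fun w => (h w : ℂ)

/-- `∂∂̄h` for a real-valued `h`. -/
noncomputable def wlapR (h : ℂ → ℝ) : ℂ → ℂ := wdz (wdzbarR h)

/-- The numerator `h·∂∂̄h − ∂h·∂̄h` of (−1/2 times) the Gaussian curvature of `h|dz|²`. -/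
noncomputable def curvNum (h : ℂ → ℝ) (z : ℂ) : ℂ :=
  (h z : ℂ) * wlapR h z - wdzR h z * wdzbarR h z

/-- The Gaussian curvature `K = −2(h·∂∂̄h − ∂h·∂̄h)/h³` of the conformal metric `h|dz|²`. -/
noncomputable def gaussCurv (h : ℂ → ℝ) (z : ℂ) : ℂ :=
  -2 * curvNum h z / (h z : ℂ) ^ 3

/-- The function `u` is the reciprocal of `t` times the divided difference of `log`
at `1`. -/
theorem u_eq_inv_mul_dslope_log (t : ℝ) : u t = (t * dslope Real.log 1 t)⁻¹ := by
  by_cases ht : t = 1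
  · simp [u, ht]
  · simp only [u, if_neg ht, dslope_of_ne _ ht, slope_def_field, Real.log_one, sub_zero]
    rw [← mul_div_assoc, inv_div]

theorem contDiffAt_u {t : ℝ} (ht : 0 < t) {m : WithTop ℕ∞} : ContDiffAt ℝ m u t := by
  have hu : u = fun t => (t * dslope Real.log 1 t)⁻¹ := funext u_eq_inv_mul_dslope_log
  have hlog : AnalyticAt ℝ (dslope Real.log 1) t := by
    by_cases h1 : t = 1
    · subst h1
      obtain ⟨q, hq⟩ := analyticAt_log (x := (1 : ℝ)) one_pos
      exact ⟨_, hq.has_fpower_series_dslope_fslope⟩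
    · have heq : dslope Real.log 1 =ᶠ[𝓝 t] fun s => Real.log s / (s - 1) := by
        filter_upwards [isOpen_ne.mem_nhds h1] with s hs
        rw [dslope_of_ne _ hs, slope_def_field, Real.log_one, sub_zero]
      refine AnalyticAt.congr ?_ heq.symm
      exact (analyticAt_log ht).div (analyticAt_id.sub analyticAt_const) (sub_ne_zero.mpr h1)
  have hne : t * dslope Real.log 1 t ≠ 0 := by
    refine mul_ne_zero ht.ne' ?_
    by_cases h1 : t = 1
    · simp [h1]
    · rw [dslope_of_ne _ h1, slope_def_field, Real.log_one, sub_zero]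
      exact div_ne_zero (Real.log_ne_zero_of_pos_of_ne_one ht h1) (sub_ne_zero.mpr h1)
  rw [hu]
  exact (analyticAt_id.mul hlog |>.inv hne).contDiffAt

theorem Filter.EventuallyEq.wdz_eq {a b : ℂ → ℂ} {z : ℂ} (hab : a =ᶠ[𝓝 z] b) :
    wdz a z = wdz b z := by
  simp only [wdz, hab.fderiv_eq]

theorem wdz_add {a b : ℂ → ℂ} {z : ℂ} (ha : DifferentiableAt ℝ a z)
    (hb : DifferentiableAt ℝ b z) : wdz (fun w => a w + b w) z = wdz a z + wdz b z := by
  simp only [wdz, fderiv_fun_add ha hb, add_apply]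
  ring

theorem wdzbar_add {a b : ℂ → ℂ} {z : ℂ} (ha : DifferentiableAt ℝ a z)
    (hb : DifferentiableAt ℝ b z) :
    wdzbar (fun w => a w + b w) z = wdzbar a z + wdzbar b z := by
  simp only [wdzbar, fderiv_fun_add ha hb, add_apply]
  ring

theorem wdz_mul {a b : ℂ → ℂ} {z : ℂ} (ha : DifferentiableAt ℝ a z)
    (hb : DifferentiableAt ℝ b z) :
    wdz (fun w => a w * b w) z = wdz a z * b z + a z * wdz b z := by
  simp only [wdz, fderiv_fun_mul ha hb, add_apply,
    smul_apply, smul_eq_mul]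
  ring

theorem wdzbar_mul {a b : ℂ → ℂ} {z : ℂ} (ha : DifferentiableAt ℝ a z)
    (hb : DifferentiableAt ℝ b z) :
    wdzbar (fun w => a w * b w) z = wdzbar a z * b z + a z * wdzbar b z := by
  simp only [wdzbar, fderiv_fun_mul ha hb, add_apply,
    smul_apply, smul_eq_mul]
  ring

theorem differentiableAt_wdzbar {a : ℂ → ℂ} {z : ℂ} (ha : ContDiffAt ℝ 2 a z) :
    DifferentiableAt ℝ (wdzbar a) z := by
  have hd : DifferentiableAt ℝ (fderiv ℝ a) z :=
    (ha.fderiv_right (m := 1) (by norm_num)).differentiableAt (by norm_num)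
  have hv (v : ℂ) : DifferentiableAt ℝ (fun w => fderiv ℝ a w v) z :=
    hd.clm_apply (differentiableAt_const v)
  exact ((hv 1).add ((hv I).const_mul I)).mul_const (2⁻¹ : ℂ)

section Inner

variable {E : Type*} [NormedAddCommGroup E] [InnerProductSpace ℂ E]

theorem fderiv_real_apply_eq_smul_deriv {A : ℂ → E} {z : ℂ} (hA : DifferentiableAt ℂ A z)
    (v : ℂ) : fderiv ℝ A z v = v • deriv A z := by
  rw [(hA.hasDerivAt.hasFDerivAt.restrictScalars ℝ).fderiv]
  simp

theorem wdz_inner {A B : ℂ → E} {z : ℂ} (hA : DifferentiableAt ℂ A z)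
    (hB : DifferentiableAt ℂ B z) :
    wdz (fun w => inner ℂ (A w) (B w)) z = inner ℂ (A z) (deriv B z) := by
  simp only [wdz, fderiv_inner_apply ℂ (hA.restrictScalars ℝ) (hB.restrictScalars ℝ),
    fderiv_real_apply_eq_smul_deriv hA, fderiv_real_apply_eq_smul_deriv hB, one_smul,
    inner_smul_left, inner_smul_right, conj_I]
  linear_combination
    (-(inner ℂ (A z) (deriv B z)) / 2 + inner ℂ (deriv A z) (B z) / 2) * I_mul_I

theorem wdzbar_inner {A B : ℂ → E} {z : ℂ} (hA : DifferentiableAt ℂ A z)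
    (hB : DifferentiableAt ℂ B z) :
    wdzbar (fun w => inner ℂ (A w) (B w)) z = inner ℂ (deriv A z) (B z) := by
  simp only [wdzbar, fderiv_inner_apply ℂ (hA.restrictScalars ℝ) (hB.restrictScalars ℝ),
    fderiv_real_apply_eq_smul_deriv hA, fderiv_real_apply_eq_smul_deriv hB, one_smul,
    inner_smul_left, inner_smul_right, conj_I]
  linear_combination
    (inner ℂ (A z) (deriv B z) / 2 - inner ℂ (deriv A z) (B z) / 2) * I_mul_I

theorem differentiableAt_real_inner {A B : ℂ → E} {z : ℂ} (hA : DifferentiableAt ℂ A z)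
    (hB : DifferentiableAt ℂ B z) :
    DifferentiableAt ℝ (fun w => (inner ℂ (A w) (B w) : ℂ)) z :=
  (hA.restrictScalars ℝ).inner ℂ (hB.restrictScalars ℝ)

variable {φ g : ℂ → ℂ} {W : ℂ → E} {z : ℂ}

theorem wdz_weighted_inner_add_inner (hφ : DifferentiableAt ℝ φ z)
    (hg : DifferentiableAt ℂ g z) (hW : DifferentiableAt ℂ W z) (hgz : g z = 0) :
    wdz (fun w => φ w * inner ℂ (g w) (g w) + inner ℂ (W w) (W w)) z =
      inner ℂ (W z) (deriv W z) := by
  have hgg := differentiableAt_real_inner hg hg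
  have hWW := differentiableAt_real_inner hW hW
  rw [wdz_add (hφ.fun_mul hgg) hWW, wdz_mul hφ hgg,
    wdz_inner hg hg, wdz_inner hW hW, hgz]
  simp

theorem wdzbar_weighted_inner_add_inner (hφ : DifferentiableAt ℝ φ z)
    (hg : DifferentiableAt ℂ g z) (hW : DifferentiableAt ℂ W z) :
    wdzbar (fun w => φ w * inner ℂ (g w) (g w) + inner ℂ (W w) (W w)) z =
      wdzbar φ z * inner ℂ (g z) (g z) + φ z * inner ℂ (deriv g z) (g z) +
        inner ℂ (deriv W z) (W z) := by
  have hgg := differentiableAt_real_inner hg hg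
  have hWW := differentiableAt_real_inner hW hW
  rw [wdzbar_add (hφ.fun_mul hgg) hWW,
    wdzbar_mul hφ hgg, wdzbar_inner hg hg, wdzbar_inner hW hW]

theorem wdz_wdzbar_weighted_inner_add_inner [CompleteSpace E] (hφ : ContDiffAt ℝ 2 φ z)
    (hg : AnalyticAt ℂ g z) (hW : AnalyticAt ℂ W z) (hgz : g z = 0) :
    wdz (wdzbar fun w => φ w * inner ℂ (g w) (g w) + inner ℂ (W w) (W w)) z =
      φ z * inner ℂ (deriv g z) (deriv g z) + inner ℂ (deriv W z) (deriv W z) := by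
  have heq : (wdzbar fun w => φ w * inner ℂ (g w) (g w) + inner ℂ (W w) (W w)) =ᶠ[𝓝 z]
      fun w => wdzbar φ w * inner ℂ (g w) (g w) + φ w * inner ℂ (deriv g w) (g w) +
        inner ℂ (deriv W w) (W w) := by
    filter_upwards [hφ.eventually (by simp), hg.eventually_analyticAt,
      hW.eventually_analyticAt] with w hφw hgw hWw
    exact wdzbar_weighted_inner_add_inner (hφw.differentiableAt (by norm_num))
      hgw.differentiableAt hWw.differentiableAt
  have dφ : DifferentiableAt ℝ φ z := hφ.differentiableAt (by norm_num)
  have dφ' := differentiableAt_wdzbar hφ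
  have dg := hg.differentiableAt
  have dg' := hg.deriv.differentiableAt
  have dW := hW.differentiableAt
  have dW' := hW.deriv.differentiableAt
  have dgg := differentiableAt_real_inner dg dg
  have ddg := differentiableAt_real_inner dg' dg
  have ddW := differentiableAt_real_inner dW' dW
  rw [heq.wdz_eq,
    wdz_add ((dφ'.fun_mul dgg).fun_add (dφ.fun_mul ddg))
      ddW,
    wdz_add (dφ'.fun_mul dgg) (dφ.fun_mul ddg),
    wdz_mul dφ' dgg, wdz_mul dφ ddg,
    wdz_inner dg dg, wdz_inner dg' dg, wdz_inner dW' dW, hgz]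
  simp

end Inner

/-- the values of `h`, `∂h`, `∂̄h` at `0` and a lower bound for `∂∂̄h(0)`,
for the leafwise restriction of the Grauert-type metric along a kernel direction. -/
theorem stmt1 (n : ℕ) (hn : 2 ≤ n)
    (f : EuclideanSpace ℂ (Fin n) → ℂ) (hf : Differentiable ℂ f)
    (p : EuclideanSpace ℂ (Fin n)) (hfp : f p ≠ 0)
    (V : Set (EuclideanSpace ℂ (Fin n))) (hV : IsOpen V) (hpV : p ∈ V)
    (X : EuclideanSpace ℂ (Fin n) → EuclideanSpace ℂ (Fin n))
    (hX : DifferentiableOn ℂ X V) (hXp : X p ≠ 0)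
    (hker : fderiv ℂ f p (X p) = 0)
    (ε : ℝ) (hε : 0 < ε)
    (Z : ℂ → EuclideanSpace ℂ (Fin n))
    (hZ : DifferentiableOn ℂ Z (Metric.ball 0 ε))
    (hZ0 : Z 0 = p)
    (hZV : ∀ T ∈ Metric.ball (0 : ℂ) ε, Z T ∈ V)
    (hZ' : ∀ T ∈ Metric.ball (0 : ℂ) ε, deriv Z T = X (Z T))
    (hfZ : ∀ T ∈ Metric.ball (0 : ℂ) ε, f (Z T) ≠ 0)
    (h : ℂ → ℝ)
    (hdef : ∀ T, h T =
      (1 + ‖f (Z T)‖ ^ 2 * u (‖f (Z T)‖ ^ 2) ^ 2) *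
        ‖fderiv ℂ f (Z T) (X (Z T))‖ ^ 2 + ‖X (Z T)‖ ^ 2) :
    h 0 = ‖X p‖ ^ 2 ∧
    wdzR h 0 = (inner ℂ (X p) (fderiv ℂ X p (X p)) : ℂ) ∧
    wdzbarR h 0 = (inner ℂ (fderiv ℂ X p (X p)) (X p) : ℂ) ∧
    (‖fderiv ℂ X p (X p)‖ ^ 2 : ℂ) ≤ wlapR h 0 := by
  have h0 : (0 : ℂ) ∈ ball (0 : ℂ) ε := mem_ball_self hε
  have hball : ball (0 : ℂ) ε ∈ 𝓝 0 := isOpen_ball.mem_nhds h0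
  have hZd {T : ℂ} (hT : T ∈ ball (0 : ℂ) ε) : DifferentiableAt ℂ Z T :=
    hZ.differentiableAt (isOpen_ball.mem_nhds hT)
  set F : ℂ → ℂ := fun T => f (Z T) with hF
  set g : ℂ → ℂ := fun T => fderiv ℂ f (Z T) (X (Z T)) with hg
  set W : ℂ → EuclideanSpace ℂ (Fin n) := fun T => X (Z T) with hW
  set φ : ℂ → ℝ := fun T => 1 + ‖F T‖ ^ 2 * u (‖F T‖ ^ 2) ^ 2 with hφ
  have hFan : AnalyticAt ℂ F 0 :=
    DifferentiableOn.analyticAt (fun T hT =>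
      ((hf (Z T)).comp T (hZd hT)).differentiableWithinAt) hball
  have hWan : AnalyticAt ℂ W 0 := (hX.comp hZ hZV).analyticAt hball
  have hgan : AnalyticAt ℂ g 0 := by
    refine hFan.deriv.congr ?_
    filter_upwards [hball] with T hT
    have hd := (hf (Z T)).hasFDerivAt.comp_hasDerivAt T (hZd hT).hasDerivAt
    rw [hZ' T hT] at hd
    exact hd.deriv
  have hg0 : g 0 = 0 := by simp only [hg, hZ0, hker]
  have hW0 : W 0 = X p := by simp only [hW, hZ0]
  have hW0' : deriv W 0 = fderiv ℂ X p (X p) := by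
    have hXd : HasFDerivAt X (fderiv ℂ X p) (Z 0) := by
      rw [hZ0]
      exact (hX.differentiableAt (hV.mem_nhds hpV)).hasFDerivAt
    have hd := hXd.comp_hasDerivAt 0 (hZd h0).hasDerivAt
    rw [hZ' 0 h0, hZ0] at hd
    exact hd.deriv
  have hφd : ContDiffAt ℝ 2 (fun T => (φ T : ℂ)) 0 := by
    have hN : ContDiffAt ℝ 2 (fun T => ‖F T‖ ^ 2) 0 :=
      (hFan.contDiffAt.restrict_scalars ℝ).norm_sq ℂ
    have hpos : 0 < ‖F 0‖ ^ 2 := by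
      have := norm_pos_iff.mpr (hfZ 0 h0)
      positivity
    have hu : ContDiffAt ℝ 2 (fun T => u (‖F T‖ ^ 2)) 0 :=
      ContDiffAt.comp (g := u) (0 : ℂ) (contDiffAt_u hpos) hN
    exact ofRealCLM.contDiff.contDiffAt.comp (0 : ℂ) (contDiffAt_const.add (hN.mul (hu.pow 2)))
  have hh : (fun T => (h T : ℂ)) =
      fun T => (φ T : ℂ) * inner ℂ (g T) (g T) + inner ℂ (W T) (W T) := by
    funext T
    rw [hdef T, inner_self_eq_norm_sq_to_K, inner_self_eq_norm_sq_to_K]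
    simp only [hφ, hF, hg, hW]
    push_cast
    rfl
  have hφ0 : (0 : ℂ) ≤ φ 0 := by
    rw [zero_le_real]
    positivity
  refine ⟨?_, ?_, ?_, ?_⟩
  · rw [hdef 0, hZ0, hker]
    simp
  · rw [wdzR, hh, wdz_weighted_inner_add_inner (hφd.differentiableAt (by norm_num))
      hgan.differentiableAt hWan.differentiableAt hg0, hW0, hW0']
  · rw [wdzbarR, hh, wdzbar_weighted_inner_add_inner (hφd.differentiableAt (by norm_num))
      hgan.differentiableAt hWan.differentiableAt, hg0, hW0, hW0']
    simp
  · rw [wlapR, wdzbarR, hh, wdz_wdzbar_weighted_inner_add_inner hφd hgan hWan hg0, hW0',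
      inner_self_eq_norm_sq_to_K, inner_self_eq_norm_sq_to_K]
    refine le_add_of_nonneg_left (mul_nonneg hφ0 ?_)
    rw [← RCLike.ofReal_pow]
    exact zero_le_real.mpr (sq_nonneg _)
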